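/- arXiv:2003.00372 — 3 statements merged into one kernel-verified Lean document; each statement's English description precedes it below -/
import Mathlib

section
/- Let p be a polynomial with complex coefficients of degree n ≥ 2 and F(z) = |p(z)|². Let z₀ ∈ ℂ with p(z₀) ≠ 0 and p'(z₀) ≠ 0 (so k(z₀) = 1), and let z₁ = z₀ − p(z₀)·conj(p'(z₀))/(9·A(z₀)²). Then F(z₁) − F(z₀) ≤ −|p(z₀)·p'(z₀)|²/(9·A(z₀)²). -/
open Polynomial Filter Topology
open scoped Classical

noncomputable section

/-- The `j`-th derivative of `p`, evaluated at `z`. -/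
def dEval (p : Polynomial ℂ) (j : ℕ) (z : ℂ) : ℂ :=
  (Polynomial.derivative^[j] p).eval z

/-- The index `k(z) = min {j ≥ 1 : p^{(j)}(z) ≠ 0}`. -/
def kIndex (p : Polynomial ℂ) (z : ℂ) : ℕ :=
  sInf {j : ℕ | 1 ≤ j ∧ dEval p j z ≠ 0}

/-- `A(z) = max {|p^{(j)}(z)|/j! : j = 0, …, n}`, where `n` is the degree of `p`. -/
def Amax (p : Polynomial ℂ) (z : ℂ) : ℝ :=
  (Finset.range (p.natDegree + 1)).sup' Finset.nonempty_range_add_one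
    (fun j => ‖dEval p j z‖ / (Nat.factorial j))

/-- `u_m = (1/m!) · p(z) · conj(p^{(m)}(z))`. -/
def uPar (p : Polynomial ℂ) (m : ℕ) (z : ℂ) : ℂ :=
  (1 / (Nat.factorial m : ℂ)) * p.eval z * (starRingEnd ℂ) (dEval p m z)

/-- `γ = 2 · Re(u_m^(m-1))`. -/
def gammaPar (p : Polynomial ℂ) (m : ℕ) (z : ℂ) : ℝ :=
  2 * ((uPar p m z) ^ (m - 1)).re

/-- `δ = -2 · Im(u_m^(m-1))`. -/
def deltaPar (p : Polynomial ℂ) (m : ℕ) (z : ℂ) : ℝ :=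
  -2 * ((uPar p m z) ^ (m - 1)).im

/-- `c_m = max {|γ|, |δ|}`. -/
def cPar (p : Polynomial ℂ) (m : ℕ) (z : ℂ) : ℝ :=
  max |gammaPar p m z| |deltaPar p m z|

/-- The angle `θ`: `0` if `c = |γ|, γ < 0`; `π/m` if `c = |γ|, γ > 0`;
`π/(2m)` if `c = |δ|, δ < 0`; `3π/(2m)` if `c = |δ|, δ > 0`. -/
def thetaPar (p : Polynomial ℂ) (m : ℕ) (z : ℂ) : ℝ :=
  if cPar p m z = |gammaPar p m z| then
    if gammaPar p m z < 0 then 0 else Real.pi / m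
  else
    if deltaPar p m z < 0 then Real.pi / (2 * m) else 3 * Real.pi / (2 * m)

/-- `C_m = c_m · |u_m|^(2-m) / (6 · A(z)²)`. -/
def CPar (p : Polynomial ℂ) (m : ℕ) (z : ℂ) : ℝ :=
  cPar p m z * ‖uPar p m z‖ ^ ((2 : ℤ) - (m : ℤ)) / (6 * (Amax p z) ^ 2)

/-- The Robust Newton iterate with prescribed index `m`:
`z + (C_m/3) · (u_m/|u_m|) · e^(iθ)`. -/
def rniWith (p : Polynomial ℂ) (m : ℕ) (z : ℂ) : ℂ :=
  z + (↑(CPar p m z / 3) : ℂ) * (uPar p m z / (↑(‖uPar p m z‖) : ℂ)) *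
    Complex.exp ((↑(thetaPar p m z) : ℂ) * Complex.I)

/-- The Robust Newton iterate `N̂_p(z)`. -/
def RN (p : Polynomial ℂ) (z : ℂ) : ℂ := rniWith p (kIndex p z) z

/-- The RNM orbit of the seed `z₀`: `z_{t+1} = N̂_p(z_t)` when `p(z_t) ≠ 0`,
and `z_{t+1} = z_t` when `p(z_t) = 0`. -/
def rnmOrbit (p : Polynomial ℂ) (z₀ : ℂ) : ℕ → ℂ
  | 0 => z₀
  | t + 1 =>
      if p.eval (rnmOrbit p z₀ t) = 0 then rnmOrbit p z₀ t
      else RN p (rnmOrbit p z₀ t)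

/-!
Put `u = p(z)`, `v = p'(z)` and `s = |v|² / (9A²)`. The step `h = -u v̄ / (9A²)` makes the linear
part of `p(z + h)` equal to `u (1 - s)`, and the bound `A` on the Taylor coefficients at `z` gives
`|h| ≤ 1/9`, so the remainder is at most `A |h|² / (1 - |h|) ≤ |u| s / 8`. Hence
`|p(z + h)| ≤ |u| (1 - 7s/8)`, and `(1 - 7s/8)² ≤ 1 - s` because `s ≤ 1/9`.
-/

section TaylorRemainder

lemma norm_eval_le_of_norm_coeff_le {R : Type*} [SeminormedRing R] [NormOneClass R] {p : R[X]}
    {A : ℝ} (hA : ∀ j, ‖p.coeff j‖ ≤ A) {x : R} (hx : ‖x‖ < 1) :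
    ‖p.eval x‖ ≤ A / (1 - ‖x‖) := by
  have hA₀ : 0 ≤ A := (norm_nonneg _).trans (hA 0)
  have hgeom : ∑ i ∈ Finset.range (p.natDegree + 1), ‖x‖ ^ i ≤ (1 - ‖x‖)⁻¹ :=
    sum_le_hasSum _ (fun _ _ => by positivity) (hasSum_geometric_of_lt_one (norm_nonneg x) hx)
  calc ‖p.eval x‖ = ‖∑ i ∈ Finset.range (p.natDegree + 1), p.coeff i * x ^ i‖ := by
        rw [eval_eq_sum_range]
    _ ≤ ∑ i ∈ Finset.range (p.natDegree + 1), A * ‖x‖ ^ i :=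
        norm_sum_le_of_le _ fun i _ => norm_mul_le_of_le (hA i) (norm_pow_le x i)
    _ = A * ∑ i ∈ Finset.range (p.natDegree + 1), ‖x‖ ^ i := (Finset.mul_sum ..).symm
    _ ≤ A / (1 - ‖x‖) := mul_le_mul_of_nonneg_left hgeom hA₀

lemma eval_add_eq_linear_add_sq_mul {R : Type*} [CommRing R] (p : R[X]) (z h : R) :
    p.eval (z + h) = p.eval z + p.derivative.eval z * h +
      h ^ 2 * (taylor z p).divX.divX.eval h := by
  have hdivX (q : R[X]) : q.eval h = q.divX.eval h * h + q.coeff 0 := by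
    simpa only [eval_add, eval_mul, eval_X, eval_C] using
      congrArg (eval h) (divX_mul_X_add q).symm
  rw [add_comm z h, ← taylor_eval, hdivX (taylor z p), hdivX (taylor z p).divX, coeff_divX,
    zero_add, taylor_coeff_zero, taylor_coeff_one]
  ring

lemma norm_eval_add_sub_linear_le {R : Type*} [SeminormedCommRing R] [NormOneClass R] {p : R[X]}
    {z h : R} {A : ℝ} (hA : ∀ j, 2 ≤ j → ‖(taylor z p).coeff j‖ ≤ A) (hh : ‖h‖ < 1) :
    ‖p.eval (z + h) - (p.eval z + p.derivative.eval z * h)‖ ≤ ‖h‖ ^ 2 * (A / (1 - ‖h‖)) := by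
  rw [eval_add_eq_linear_add_sq_mul, add_sub_cancel_left]
  have hquot : ‖(taylor z p).divX.divX.eval h‖ ≤ A / (1 - ‖h‖) :=
    norm_eval_le_of_norm_coeff_le (fun j => by simpa only [coeff_divX] using hA _ (by omega)) hh
  exact norm_mul_le_of_le (norm_pow_le h 2) hquot

end TaylorRemainder

section ConjugateStep

lemma mul_div_nine_mul_sq_le {x y A : ℝ} (hA : 0 < A) (hy : 0 ≤ y) (hxA : x ≤ A) (hyA : y ≤ A) :
    x * y / (9 * A ^ 2) ≤ 1 / 9 := by
  rw [div_le_iff₀ (by positivity)]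
  linarith [mul_le_mul hxA hyA hy hA.le]

variable {𝕜 : Type*} [RCLike 𝕜]

lemma norm_mul_conj_div_ofReal (u v : 𝕜) {t : ℝ} (ht : 0 ≤ t) :
    ‖u * (starRingEnd 𝕜) v / (t : 𝕜)‖ = ‖u‖ * ‖v‖ / t := by
  rw [norm_div, norm_mul, RCLike.norm_conj, RCLike.norm_of_nonneg ht]

lemma add_mul_neg_mul_conj_div (u v : 𝕜) (t : ℝ) :
    u + v * -(u * (starRingEnd 𝕜) v / (t : 𝕜)) = u * ((1 - ‖v‖ ^ 2 / t : ℝ) : 𝕜) := by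
  push_cast
  rw [← RCLike.mul_conj v]
  ring

lemma norm_eval_sub_conj_step_le {p : 𝕜[X]} {z : 𝕜} {A : ℝ} (hA : 0 < A)
    (hcoeff : ∀ j, ‖(taylor z p).coeff j‖ ≤ A) :
    ‖p.eval (z - p.eval z * (starRingEnd 𝕜) (p.derivative.eval z) / ((9 * A ^ 2 : ℝ) : 𝕜))‖ ≤
      ‖p.eval z‖ * (1 - 7 / 8 * (‖p.derivative.eval z‖ ^ 2 / (9 * A ^ 2))) := by
  have hu : ‖p.eval z‖ ≤ A := by simpa only [taylor_coeff_zero] using hcoeff 0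
  have hv : ‖p.derivative.eval z‖ ≤ A := by simpa only [taylor_coeff_one] using hcoeff 1
  rw [sub_eq_add_neg]
  set u := p.eval z
  set v := p.derivative.eval z
  set h : 𝕜 := -(u * (starRingEnd 𝕜) v / ((9 * A ^ 2 : ℝ) : 𝕜)) with h_def
  set s : ℝ := ‖v‖ ^ 2 / (9 * A ^ 2) with s_def
  have hs : s ≤ 1 / 9 := by
    rw [s_def, sq]
    exact mul_div_nine_mul_sq_le hA (norm_nonneg v) hv hv
  have h_norm : ‖h‖ = ‖u‖ * ‖v‖ / (9 * A ^ 2) := by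
    rw [h_def, norm_neg, norm_mul_conj_div_ofReal u v (by positivity)]
  have h_le : ‖h‖ ≤ 1 / 9 := by
    rw [h_norm]
    exact mul_div_nine_mul_sq_le hA (norm_nonneg v) hu hv
  have h_linear : ‖u + v * h‖ = ‖u‖ * (1 - s) := by
    rw [h_def, add_mul_neg_mul_conj_div, norm_mul, RCLike.norm_of_nonneg (by linarith)]
  have h_remainder : ‖p.eval (z + h) - (u + v * h)‖ ≤ ‖u‖ * s / 8 :=
    calc ‖p.eval (z + h) - (u + v * h)‖ ≤ ‖h‖ ^ 2 * (A / (1 - ‖h‖)) :=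
          norm_eval_add_sub_linear_le (fun j _ => hcoeff j) (h_le.trans_lt (by norm_num))
      _ ≤ ‖h‖ ^ 2 * (A / (1 - 1 / 9)) := by gcongr
      _ = ‖u‖ * s / 8 * (‖u‖ / A) := by rw [h_norm, s_def]; field_simp; norm_num
      _ ≤ ‖u‖ * s / 8 := mul_le_of_le_one_right (by positivity) ((div_le_one hA).mpr hu)
  calc ‖p.eval (z + h)‖ ≤ ‖p.eval (z + h) - (u + v * h)‖ + ‖u + v * h‖ := norm_le_norm_sub_add _ _
    _ ≤ ‖u‖ * s / 8 + ‖u‖ * (1 - s) := add_le_add h_remainder h_linear.le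
    _ = ‖u‖ * (1 - 7 / 8 * s) := by ring

theorem modulus_reduction_k_eq_one_general {p : 𝕜[X]} {z : 𝕜} {A : ℝ} (hA : 0 < A)
    (hcoeff : ∀ j, ‖(taylor z p).coeff j‖ ≤ A) :
    ‖p.eval (z - p.eval z * (starRingEnd 𝕜) (p.derivative.eval z) /
        ((9 * A ^ 2 : ℝ) : 𝕜))‖ ^ 2 - ‖p.eval z‖ ^ 2 ≤
      -(‖p.eval z * p.derivative.eval z‖ ^ 2 / (9 * A ^ 2)) := by
  have hv : ‖p.derivative.eval z‖ ≤ A := by simpa only [taylor_coeff_one] using hcoeff 1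
  have h_step := norm_eval_sub_conj_step_le hA hcoeff
  set s : ℝ := ‖p.derivative.eval z‖ ^ 2 / (9 * A ^ 2) with s_def
  have hs₀ : 0 ≤ s := by positivity
  have hs : s ≤ 1 / 9 := by
    rw [s_def, sq]
    exact mul_div_nine_mul_sq_le hA (norm_nonneg _) hv hv
  have h_contraction : (1 - 7 / 8 * s) ^ 2 ≤ 1 - s := by nlinarith
  rw [norm_mul, mul_pow, mul_div_assoc (‖p.eval z‖ ^ 2), ← s_def, sub_le_iff_le_add]
  calc _ ≤ (‖p.eval z‖ * (1 - 7 / 8 * s)) ^ 2 := by gcongr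
    _ = ‖p.eval z‖ ^ 2 * (1 - 7 / 8 * s) ^ 2 := mul_pow ..
    _ ≤ ‖p.eval z‖ ^ 2 * (1 - s) := by gcongr
    _ = -(‖p.eval z‖ ^ 2 * s) + ‖p.eval z‖ ^ 2 := by ring

end ConjugateStep

lemma dEval_eq_factorial_mul_taylor_coeff (p : ℂ[X]) (j : ℕ) (z : ℂ) :
    dEval p j z = (j.factorial : ℂ) * (taylor z p).coeff j := by
  rw [dEval, taylor_coeff, ← factorial_smul_hasseDeriv, LinearMap.smul_apply, eval_smul,
    nsmul_eq_mul]

lemma norm_taylor_coeff_eq_norm_dEval_div (p : ℂ[X]) (j : ℕ) (z : ℂ) :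
    ‖(taylor z p).coeff j‖ = ‖dEval p j z‖ / j.factorial := by
  rw [dEval_eq_factorial_mul_taylor_coeff, norm_mul, Complex.norm_natCast,
    mul_div_cancel_left₀ _ (Nat.cast_ne_zero.mpr j.factorial_ne_zero)]

lemma norm_taylor_coeff_le_Amax (p : ℂ[X]) (z : ℂ) (j : ℕ) :
    ‖(taylor z p).coeff j‖ ≤ Amax p z := by
  have h_le {i : ℕ} (hi : i ≤ p.natDegree) : ‖(taylor z p).coeff i‖ ≤ Amax p z := by
    rw [norm_taylor_coeff_eq_norm_dEval_div]
    exact Finset.le_sup' (fun i => ‖dEval p i z‖ / i.factorial)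
      (Finset.mem_range_succ_iff.mpr hi)
  rcases le_or_gt j p.natDegree with hj | hj
  · exact h_le hj
  · rw [coeff_eq_zero_of_natDegree_lt (by rwa [natDegree_taylor]), norm_zero]
    exact (norm_nonneg _).trans (h_le p.natDegree.zero_le)

lemma norm_eval_le_Amax (p : ℂ[X]) (z : ℂ) : ‖p.eval z‖ ≤ Amax p z := by
  simpa only [taylor_coeff_zero] using norm_taylor_coeff_le_Amax p z 0

/-- When `p(z₀) ≠ 0` and `p'(z₀) ≠ 0` (so `k(z₀) = 1`), the Robust Newton iterate
`z₁ = z₀ − p(z₀)·conj(p'(z₀))/(9·A(z₀)²)` satisfies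
`F(z₁) − F(z₀) ≤ −|p(z₀)·p'(z₀)|²/(9·A(z₀)²)`. -/
theorem modulus_reduction_k_eq_one (p : Polynomial ℂ) (hdeg : 2 ≤ p.natDegree)
    (z₀ : ℂ) (hp : p.eval z₀ ≠ 0) (hp' : p.derivative.eval z₀ ≠ 0) :
    ‖p.eval (z₀ - p.eval z₀ * (starRingEnd ℂ) (p.derivative.eval z₀) /
        ((9 * (Amax p z₀) ^ 2 : ℝ) : ℂ))‖ ^ 2 - ‖p.eval z₀‖ ^ 2 ≤
      -(‖p.eval z₀ * p.derivative.eval z₀‖ ^ 2 / (9 * (Amax p z₀) ^ 2)) :=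
  modulus_reduction_k_eq_one_general ((norm_pos_iff.mpr hp).trans_le (norm_eval_le_Amax p z₀))
    (norm_taylor_coeff_le_Amax p z₀)
end
end

section
/- Escape from critical points: Let p be a polynomial with complex coefficients of degree n ≥ 2 and let c ∈ ℂ be a critical point of p (p'(c) = 0) with p(c) ≠ 0. Then for every ρ > 0 there exists z ∈ ℂ with |z − c| < ρ and p(z) ≠ 0 such that the Robust Newton iterate z' = N̂_p(z) satisfies |p(z')| < |p(c)|; consequently the RNM orbit of z does not converge to c. -/
open Polynomial Filter Topology
open scoped Classical

noncomputable section

/-!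
Write `p (z + h) = a₀ + a_k h ^ k + O(A |h| ^ (k + 1))`, where `a_k` is the first nonvanishing
Taylor coefficient after `a₀` and `A` bounds all of them. With `u = a₀ * conj a_k` and `h` a
positive multiple of `u * e ^ (iθ)`, the leading change of `|p| ^ 2` is a positive multiple of
`Re (u ^ (k - 1) * e ^ (ikθ))`, and `θ` makes `e ^ (ikθ)` the fourth root of unity for which this
real part is `-max |Re (u ^ (k - 1))| |Im (u ^ (k - 1))|`. The step length `C_k / 3 ≤ 1 / 9` is
short enough for this decrease to dominate the remainder. Hence `|p|` strictly decreases along an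
orbit until it meets a root; the orbit of `c` drops below the level `|p c|` at its first step, and
continuity of `|p|` then keeps it away from `c`.
-/

open scoped ComplexConjugate InnerProductSpace

theorem not_mapClusterPt_of_antitone_comp {ι X α : Type*} [Preorder ι] [TopologicalSpace X]
    [TopologicalSpace α] [LinearOrder α] [ClosedIicTopology α] {V : X → α} {x : ι → X} {c : X}
    {i : ι} (hV : ContinuousAt V c) (hanti : Antitone (V ∘ x)) (hi : V (x i) < V c) :
    ¬ MapClusterPt c atTop x := by
  intro hc
  have hfreq : ∃ᶠ j in atTop, V (x i) < V (x j) :=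
    mapClusterPt_iff_frequently.1 hc _ (hV.eventually_const_lt hi)
  obtain ⟨j, hlt, hij⟩ := (hfreq.and_eventually (eventually_ge_atTop i)).exists
  exact hlt.not_ge (hanti hij)

section PolynomialExpansion

theorem exists_eq_add_monomial_add_X_pow_mul {R : Type*} [Ring R] {q : R[X]} {k : ℕ}
    (hk : k ≠ 0) (hgap : ∀ j, 0 < j → j < k → q.coeff j = 0) :
    ∃ r : R[X], q = C (q.coeff 0) + C (q.coeff k) * X ^ k + X ^ (k + 1) * r ∧
      ∀ i, r.coeff i = q.coeff (i + (k + 1)) := by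
  have hdvd : X ^ (k + 1) ∣ q - C (q.coeff 0) - C (q.coeff k) * X ^ k := by
    refine X_pow_dvd_iff.2 fun d hd => ?_
    simp only [coeff_sub, coeff_C, coeff_C_mul_X_pow]
    grind
  obtain ⟨r, hr⟩ := hdvd
  refine ⟨r, by rw [← hr]; abel, fun i => ?_⟩
  rw [← coeff_X_pow_mul r (k + 1) i, ← hr]
  simp only [coeff_sub, coeff_C, coeff_C_mul_X_pow]
  grind

variable {𝕜 : Type*} [NormedField 𝕜] {q : 𝕜[X]} {A : ℝ} {h : 𝕜}

theorem norm_eval_le_of_norm_coeff_le_s10 (hA : ∀ j, ‖q.coeff j‖ ≤ A) (hh : ‖h‖ < 1) :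
    ‖q.eval h‖ ≤ A / (1 - ‖h‖) := by
  have hA0 : 0 ≤ A := (norm_nonneg _).trans (hA 0)
  calc ‖q.eval h‖ = ‖∑ i ∈ Finset.range (q.natDegree + 1), q.coeff i * h ^ i‖ := by
        rw [eval_eq_sum_range]
    _ ≤ ∑ i ∈ Finset.range (q.natDegree + 1), A * ‖h‖ ^ i := by
        refine norm_sum_le_of_le _ fun i _ => ?_
        rw [norm_mul, norm_pow]
        gcongr
        exact hA i
    _ ≤ A * ∑' i : ℕ, ‖h‖ ^ i := by
        rw [← Finset.mul_sum]
        gcongr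
        exact (summable_geometric_of_lt_one (norm_nonneg h) hh).sum_le_tsum _
          fun i _ => by positivity
    _ = A / (1 - ‖h‖) := by
        rw [tsum_geometric_of_lt_one (norm_nonneg h) hh, div_eq_mul_inv]

theorem norm_eval_sub_coeff_zero_sub_le {k : ℕ} (hk : k ≠ 0)
    (hgap : ∀ j, 0 < j → j < k → q.coeff j = 0) (hA : ∀ j, ‖q.coeff j‖ ≤ A) (hh : ‖h‖ < 1) :
    ‖q.eval h - q.coeff 0 - q.coeff k * h ^ k‖ ≤ ‖h‖ ^ (k + 1) * (A / (1 - ‖h‖)) := by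
  obtain ⟨r, hq, hr⟩ := exists_eq_add_monomial_add_X_pow_mul hk hgap
  have hrem : q.eval h - q.coeff 0 - q.coeff k * h ^ k = h ^ (k + 1) * r.eval h := by
    nth_rw 1 [hq]
    simp only [eval_add, eval_mul, eval_C, eval_pow, eval_X]
    ring
  rw [hrem, norm_mul, norm_pow]
  gcongr
  exact norm_eval_le_of_norm_coeff_le_s10 (fun i => by rw [hr]; exact hA _) hh

end PolynomialExpansion

theorem norm_add_lt_norm_of_inner_lt {𝕜 E : Type*} [RCLike 𝕜] [SeminormedAddCommGroup E]
    [InnerProductSpace 𝕜 E] {x y : E} (hxy : 2 * RCLike.re ⟪x, y⟫_𝕜 + ‖y‖ ^ 2 < 0) :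
    ‖x + y‖ < ‖x‖ := by
  refine lt_of_pow_lt_pow_left₀ 2 (norm_nonneg x) ?_
  rw [norm_add_sq (𝕜 := 𝕜)]
  linarith

theorem norm_eval_lt_norm_coeff_zero {𝕜 : Type*} [RCLike 𝕜] {q : 𝕜[X]} {k : ℕ} {A : ℝ} {h : 𝕜}
    (hk : k ≠ 0) (hgap : ∀ j, 0 < j → j < k → q.coeff j = 0) (hA0 : 0 < A)
    (hA : ∀ j, ‖q.coeff j‖ ≤ A) (hh0 : h ≠ 0) (hh : ‖h‖ ≤ 1 / 9)
    (hlead : RCLike.re ⟪q.coeff 0, q.coeff k * h ^ k⟫_𝕜 ≤ -(2 * A ^ 2 * ‖h‖ ^ (k + 1))) :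
    ‖q.eval h‖ < ‖q.coeff 0‖ := by
  have hr0 : 0 < ‖h‖ := norm_pos_iff.2 hh0
  set T := q.coeff k * h ^ k with hT
  set R := q.eval h - q.coeff 0 - T
  have hTle : ‖T‖ ≤ A * ‖h‖ ^ k := by
    rw [hT, norm_mul, norm_pow]
    gcongr
    exact hA k
  have hRle : ‖R‖ ≤ 9 / 8 * A * ‖h‖ ^ (k + 1) := by
    calc ‖R‖ ≤ ‖h‖ ^ (k + 1) * (A / (1 - ‖h‖)) :=
          norm_eval_sub_coeff_zero_sub_le hk hgap hA (by linarith)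
      _ ≤ ‖h‖ ^ (k + 1) * (A / (1 - 1 / 9)) := by gcongr
      _ = 9 / 8 * A * ‖h‖ ^ (k + 1) := by ring
  have hinner : RCLike.re ⟪q.coeff 0, T + R⟫_𝕜 ≤ -(7 / 8 * A ^ 2 * ‖h‖ ^ (k + 1)) := by
    have hR : RCLike.re ⟪q.coeff 0, R⟫_𝕜 ≤ A * (9 / 8 * A * ‖h‖ ^ (k + 1)) :=
      (re_inner_le_norm _ _).trans (by gcongr; exact hA 0)
    rw [inner_add_right, map_add]
    linarith
  have hTR : ‖T + R‖ ^ 2 ≤ (9 / 8) ^ 2 * A ^ 2 * ‖h‖ ^ (k + 1) := by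
    have hadd : ‖T + R‖ ≤ 9 / 8 * A * ‖h‖ ^ k := by
      calc ‖T + R‖ ≤ A * ‖h‖ ^ k + 9 / 8 * A * (‖h‖ ^ k * ‖h‖) := by
            rw [← pow_succ]; exact norm_add_le_of_le hTle hRle
        _ ≤ A * ‖h‖ ^ k + 9 / 8 * A * (‖h‖ ^ k * (1 / 9)) := by gcongr
        _ = 9 / 8 * A * ‖h‖ ^ k := by ring
    calc ‖T + R‖ ^ 2 ≤ (9 / 8 * A * ‖h‖ ^ k) ^ 2 := by gcongr
      _ = (9 / 8) ^ 2 * A ^ 2 * ‖h‖ ^ (k + k) := by ring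
      _ ≤ (9 / 8) ^ 2 * A ^ 2 * ‖h‖ ^ (k + 1) := by
          gcongr ?_ * ?_
          exact pow_le_pow_of_le_one hr0.le (by linarith) (by omega)
  have hpos : 0 < A ^ 2 * ‖h‖ ^ (k + 1) := by positivity
  have heval : q.eval h = q.coeff 0 + (T + R) := by ring
  rw [heval]
  -- The constants satisfy `-2 * 2 + 2 * (9 / 8) + (9 / 8) ^ 2 < 0`.
  exact norm_add_lt_norm_of_inner_lt (𝕜 := 𝕜) (by linarith)

section TaylorCoefficients

variable (p : ℂ[X]) (z : ℂ)

theorem coeff_taylor_eq_dEval_div (j : ℕ) :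
    (taylor z p).coeff j = dEval p j z / (j.factorial : ℂ) := by
  have hfac : (j.factorial : ℂ) ≠ 0 := Nat.cast_ne_zero.2 j.factorial_ne_zero
  rw [eq_div_iff hfac, taylor_coeff, dEval, ← factorial_smul_hasseDeriv, LinearMap.smul_apply,
    eval_smul, nsmul_eq_mul, mul_comm]

theorem Amax_nonneg : 0 ≤ Amax p z :=
  Finset.le_sup'_of_le _ (Finset.mem_range.2 p.natDegree.succ_pos) (by positivity)

theorem norm_coeff_taylor_le_Amax (j : ℕ) : ‖(taylor z p).coeff j‖ ≤ Amax p z := by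
  by_cases hj : j < p.natDegree + 1
  · rw [coeff_taylor_eq_dEval_div, norm_div, Complex.norm_natCast]
    exact Finset.le_sup' (fun j => ‖dEval p j z‖ / j.factorial) (Finset.mem_range.2 hj)
  · rw [coeff_eq_zero_of_natDegree_lt (by rw [natDegree_taylor]; omega), norm_zero]
    exact Amax_nonneg p z

theorem uPar_eq_mul_conj_coeff_taylor (m : ℕ) :
    uPar p m z = (taylor z p).coeff 0 * conj ((taylor z p).coeff m) := by
  rw [uPar, taylor_coeff_zero, coeff_taylor_eq_dEval_div, map_div₀, Complex.conj_natCast]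
  ring

theorem norm_uPar_le (m : ℕ) : ‖uPar p m z‖ ≤ Amax p z ^ 2 := by
  rw [uPar_eq_mul_conj_coeff_taylor, norm_mul, Complex.norm_conj, sq]
  gcongr
  · exact Amax_nonneg p z
  · exact norm_coeff_taylor_le_Amax p z 0
  · exact norm_coeff_taylor_le_Amax p z m

variable {p z}

theorem Amax_pos_of_uPar_ne_zero {m : ℕ} (hu : uPar p m z ≠ 0) : 0 < Amax p z :=
  lt_of_pow_lt_pow_left₀ 2 (Amax_nonneg p z) <| by
    simpa using (norm_pos_iff.2 hu).trans_le (norm_uPar_le p z m)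

theorem dEval_eq_zero_of_lt_kIndex {j : ℕ} (hj : 0 < j) (hlt : j < kIndex p z) :
    dEval p j z = 0 := by
  by_contra hne
  exact Nat.notMem_of_lt_sInf hlt ⟨hj, hne⟩

theorem kIndex_ne_zero_and_dEval_kIndex_ne_zero (hdeg : p.natDegree ≠ 0) :
    kIndex p z ≠ 0 ∧ dEval p (kIndex p z) z ≠ 0 := by
  have htop : dEval p p.natDegree z ≠ 0 := by
    intro h0
    have hlead := coeff_taylor_eq_dEval_div p z p.natDegree
    rw [h0, zero_div, coeff_taylor_natDegree, leadingCoeff_eq_zero] at hlead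
    exact hdeg (by rw [hlead, natDegree_zero])
  have hmem : kIndex p z ∈ {j : ℕ | 1 ≤ j ∧ dEval p j z ≠ 0} :=
    Nat.sInf_mem ⟨p.natDegree, Nat.one_le_iff_ne_zero.2 hdeg, htop⟩
  exact ⟨Nat.one_le_iff_ne_zero.1 hmem.1, hmem.2⟩

theorem uPar_ne_zero {m : ℕ} (hz : p.eval z ≠ 0) (hm : dEval p m z ≠ 0) : uPar p m z ≠ 0 :=
  mul_ne_zero (mul_ne_zero (one_div_ne_zero (Nat.cast_ne_zero.2 m.factorial_ne_zero)) hz)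
    (star_ne_zero.2 hm)

end TaylorCoefficients

section StepLength

variable {p : ℂ[X]} {m : ℕ} {z : ℂ}

theorem cPar_pos (hu : uPar p m z ≠ 0) : 0 < cPar p m z := by
  have hw : uPar p m z ^ (m - 1) ≠ 0 := pow_ne_zero _ hu
  by_contra! hc
  obtain ⟨hγ, hδ⟩ := max_le_iff.1 hc
  rw [abs_nonpos_iff, gammaPar] at hγ
  rw [abs_nonpos_iff, deltaPar] at hδ
  exact hw (Complex.ext (by simpa using hγ) (by simpa using hδ))

theorem cPar_le (p : ℂ[X]) (m : ℕ) (z : ℂ) : cPar p m z ≤ 2 * ‖uPar p m z‖ ^ (m - 1) := by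
  rw [← norm_pow, cPar, gammaPar, deltaPar, abs_mul, abs_mul, abs_neg, abs_two]
  refine max_le ?_ ?_
  · gcongr
    exact Complex.abs_re_le_norm _
  · gcongr
    exact Complex.abs_im_le_norm _

theorem CPar_pos (hu : uPar p m z ≠ 0) : 0 < CPar p m z := by
  have hc := cPar_pos hu
  have hA := Amax_pos_of_uPar_ne_zero hu
  rw [CPar]
  positivity

theorem CPar_le_one_third (hm : m ≠ 0) (hu : uPar p m z ≠ 0) : CPar p m z ≤ 1 / 3 := by
  have hpow : ‖uPar p m z‖ ^ (m - 1) * ‖uPar p m z‖ ^ ((2 : ℤ) - m) = ‖uPar p m z‖ := by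
    rw [← zpow_natCast, ← zpow_add₀ (norm_ne_zero_iff.2 hu),
      show ((m - 1 : ℕ) : ℤ) + (2 - m) = 1 by omega, zpow_one]
  refine div_le_of_le_mul₀ (by positivity) (by norm_num) ?_
  calc cPar p m z * ‖uPar p m z‖ ^ ((2 : ℤ) - m)
      ≤ 2 * ‖uPar p m z‖ ^ (m - 1) * ‖uPar p m z‖ ^ ((2 : ℤ) - m) := by gcongr; exact cPar_le p m z
    _ = 2 * ‖uPar p m z‖ := by rw [mul_assoc, hpow]
    _ ≤ 2 * Amax p z ^ 2 := by gcongr; exact norm_uPar_le p z m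
    _ = 1 / 3 * (6 * Amax p z ^ 2) := by ring

end StepLength

section StepDirection

theorem exp_div_mul_I_pow {m : ℕ} (hm : m ≠ 0) (t : ℝ) :
    Complex.exp (((t / m : ℝ) : ℂ) * Complex.I) ^ m = Complex.exp (t * Complex.I) := by
  have hm' : (m : ℂ) ≠ 0 := Nat.cast_ne_zero.2 hm
  rw [← Complex.exp_nat_mul]
  congr 1
  push_cast
  field_simp

theorem exp_thetaPar_mul_I_pow (p : ℂ[X]) {m : ℕ} (hm : m ≠ 0) (z : ℂ) :
    Complex.exp (thetaPar p m z * Complex.I) ^ m =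
      if cPar p m z = |gammaPar p m z| then if gammaPar p m z < 0 then 1 else -1
      else if deltaPar p m z < 0 then Complex.I else -Complex.I := by
  have hthree_halves : ((3 * Real.pi / 2 : ℝ) : ℂ) * Complex.I
      = Real.pi * Complex.I + Real.pi / 2 * Complex.I := by
    push_cast
    ring
  unfold thetaPar
  split_ifs
  · simp only [Complex.ofReal_zero, zero_mul, Complex.exp_zero, one_pow]
  · rw [exp_div_mul_I_pow hm, Complex.exp_pi_mul_I]
  · rw [← div_div, exp_div_mul_I_pow hm, Complex.ofReal_div, Complex.ofReal_ofNat,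
      Complex.exp_pi_div_two_mul_I]
  · rw [← div_div, exp_div_mul_I_pow hm, hthree_halves, Complex.exp_add, Complex.exp_pi_mul_I,
      Complex.exp_pi_div_two_mul_I, neg_one_mul]

theorem two_mul_re_uPar_pow_mul_exp_thetaPar (p : ℂ[X]) {m : ℕ} (hm : m ≠ 0) (z : ℂ) :
    2 * (uPar p m z ^ (m - 1) * Complex.exp (thetaPar p m z * Complex.I) ^ m).re
      = -cPar p m z := by
  have hγ : 2 * (uPar p m z ^ (m - 1)).re = gammaPar p m z := rfl
  have hδ : -2 * (uPar p m z ^ (m - 1)).im = deltaPar p m z := rfl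
  have hcδ (hne : cPar p m z ≠ |gammaPar p m z|) : cPar p m z = |deltaPar p m z| :=
    (max_choice _ _).resolve_left hne
  rw [exp_thetaPar_mul_I_pow p hm z]
  split_ifs with hc hneg hneg
  · rw [hc, abs_of_neg hneg, mul_one, neg_neg, hγ]
  · rw [hc, abs_of_nonneg (not_lt.1 hneg), mul_neg_one, Complex.neg_re, ← hγ]
    ring
  · rw [hcδ hc, abs_of_neg hneg, Complex.mul_I_re, ← hδ]
    ring
  · rw [hcδ hc, abs_of_nonneg (not_lt.1 hneg), mul_neg, Complex.neg_re, Complex.mul_I_re, ← hδ]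
    ring

theorem conj_mul_div_norm_pow {u : ℂ} (hu : u ≠ 0) {m : ℕ} (hm : m ≠ 0) :
    conj u * (u / ‖u‖) ^ m = ((‖u‖ ^ ((2 : ℤ) - m) : ℝ) : ℂ) * u ^ (m - 1) := by
  have hu' : (‖u‖ : ℂ) ≠ 0 := Complex.ofReal_ne_zero.2 (norm_ne_zero_iff.2 hu)
  have hzpow : ((‖u‖ ^ ((2 : ℤ) - m) : ℝ) : ℂ) = ‖u‖ ^ 2 / ‖u‖ ^ m := by
    rw [Complex.ofReal_zpow, zpow_sub₀ hu', zpow_natCast, zpow_ofNat]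
  rw [hzpow, ← Complex.conj_mul', div_pow, ← mul_pow_sub_one hm u]
  ring

end StepDirection

/-- The displacement `(C_m / 3) * (u_m / |u_m|) * e ^ (iθ)` of the Robust Newton step with
prescribed index `m`, split off from `rniWith` so that `p` can be Taylor expanded along it. -/
def rnStep (p : ℂ[X]) (m : ℕ) (z : ℂ) : ℂ :=
  ((CPar p m z / 3 : ℝ) : ℂ) * (uPar p m z / ‖uPar p m z‖) *
    Complex.exp (thetaPar p m z * Complex.I)

section Descent

variable {p : ℂ[X]} {m : ℕ} {z : ℂ}

theorem norm_rnStep (hu : uPar p m z ≠ 0) :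
    ‖rnStep p m z‖ = CPar p m z / 3 := by
  have hC : 0 ≤ CPar p m z / 3 := (div_pos (CPar_pos hu) three_pos).le
  rw [rnStep, norm_mul, norm_mul, norm_div, Complex.norm_exp_ofReal_mul_I, Complex.norm_real,
    Complex.norm_real, norm_norm, div_self (norm_ne_zero_iff.2 hu), Real.norm_of_nonneg hC,
    mul_one, mul_one]

theorem re_inner_coeff_taylor_mul_rnStep_pow (hm : m ≠ 0) (hu : uPar p m z ≠ 0) :
    RCLike.re ⟪(taylor z p).coeff 0, (taylor z p).coeff m * rnStep p m z ^ m⟫_ℂ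
      = -(9 * Amax p z ^ 2 * ‖rnStep p m z‖ ^ (m + 1)) := by
  set u := uPar p m z with hu_def
  set E := Complex.exp (thetaPar p m z * Complex.I)
  set r := CPar p m z / 3 with hr
  have hinner : ⟪(taylor z p).coeff 0, (taylor z p).coeff m * rnStep p m z ^ m⟫_ℂ
      = ((r ^ m * ‖u‖ ^ ((2 : ℤ) - m) : ℝ) : ℂ) * (u ^ (m - 1) * E ^ m) := by
    have hconj : conj u = conj ((taylor z p).coeff 0) * (taylor z p).coeff m := by
      rw [hu_def, uPar_eq_mul_conj_coeff_taylor, map_mul, Complex.conj_conj]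
    calc ⟪(taylor z p).coeff 0, (taylor z p).coeff m * rnStep p m z ^ m⟫_ℂ
        = (r : ℂ) ^ m * (conj u * (u / ‖u‖) ^ m) * E ^ m := by
          rw [RCLike.inner_apply, hconj, rnStep]
          ring
      _ = _ := by
          rw [conj_mul_div_norm_pow hu hm, Complex.ofReal_mul, Complex.ofReal_pow]
          ring
  have hscale : cPar p m z * ‖u‖ ^ ((2 : ℤ) - m) = 18 * Amax p z ^ 2 * r := by
    have hA := (Amax_pos_of_uPar_ne_zero hu).ne'
    rw [hr, CPar, ← hu_def]
    field_simp
    ring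
  have hre : 2 * (u ^ (m - 1) * E ^ m).re = -cPar p m z :=
    two_mul_re_uPar_pow_mul_exp_thetaPar p hm z
  rw [hinner, RCLike.re_eq_complex_re, Complex.re_ofReal_mul, norm_rnStep hu]
  linear_combination r ^ m * ‖u‖ ^ ((2 : ℤ) - m) / 2 * hre - r ^ m / 2 * hscale

theorem norm_eval_rniWith_lt (hm : m ≠ 0) (hgap : ∀ j, 0 < j → j < m → dEval p j z = 0)
    (hpm : dEval p m z ≠ 0) (hz : p.eval z ≠ 0) :
    ‖p.eval (rniWith p m z)‖ < ‖p.eval z‖ := by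
  have hu : uPar p m z ≠ 0 := uPar_ne_zero hz hpm
  have hnorm : ‖rnStep p m z‖ = CPar p m z / 3 := norm_rnStep hu
  have hstep : rnStep p m z ≠ 0 :=
    norm_pos_iff.1 (hnorm ▸ div_pos (CPar_pos hu) three_pos)
  have hA : 0 < Amax p z := Amax_pos_of_uPar_ne_zero hu
  have heval : p.eval (rniWith p m z) = (taylor z p).eval (rnStep p m z) := by
    rw [taylor_eval, add_comm]
    rfl
  rw [heval, ← taylor_coeff_zero z p]
  refine norm_eval_lt_norm_coeff_zero hm (fun j hj hjm => ?_) hA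
    (norm_coeff_taylor_le_Amax p z) hstep ?_ ?_
  · rw [coeff_taylor_eq_dEval_div, hgap j hj hjm, zero_div]
  · linarith [CPar_le_one_third hm hu]
  · rw [re_inner_coeff_taylor_mul_rnStep_pow hm hu]
    gcongr
    norm_num

theorem norm_eval_RN_lt (hdeg : p.natDegree ≠ 0) (hz : p.eval z ≠ 0) :
    ‖p.eval (RN p z)‖ < ‖p.eval z‖ :=
  have ⟨hk, hpk⟩ := kIndex_ne_zero_and_dEval_kIndex_ne_zero hdeg
  norm_eval_rniWith_lt hk (fun _ => dEval_eq_zero_of_lt_kIndex) hpk hz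

theorem antitone_norm_eval_rnmOrbit (hdeg : p.natDegree ≠ 0) (z : ℂ) :
    Antitone ((fun w => ‖p.eval w‖) ∘ rnmOrbit p z) := by
  refine antitone_nat_of_succ_le fun t => ?_
  simp only [Function.comp_apply, rnmOrbit]
  split_ifs with hroot
  · exact le_rfl
  · exact (norm_eval_RN_lt hdeg hroot).le

end Descent

theorem rnm_escapes_critical_point_general {p : ℂ[X]} (hdeg : p.natDegree ≠ 0) {c z : ℂ}
    (hz : p.eval z ≠ 0) (hzc : ‖p.eval z‖ ≤ ‖p.eval c‖) :
    ‖p.eval (RN p z)‖ < ‖p.eval c‖ ∧ ¬ MapClusterPt c atTop (rnmOrbit p z) := by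
  have hlt : ‖p.eval (RN p z)‖ < ‖p.eval c‖ := (norm_eval_RN_lt hdeg hz).trans_le hzc
  have hone : rnmOrbit p z 1 = RN p z := if_neg hz
  exact ⟨hlt, not_mapClusterPt_of_antitone_comp p.continuous.norm.continuousAt
    (antitone_norm_eval_rnmOrbit hdeg z) (hone ▸ hlt)⟩

/-- **Escape from critical points.** Let `c` be a critical point of `p` with `p(c) ≠ 0`.
Then in every neighborhood of `c` there is a point `z` with `p(z) ≠ 0` whose Robust Newton
iterate `z' = N̂_p(z)` satisfies `|p(z')| < |p(c)|`; consequently the RNM orbit of `z` does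
not converge to `c`. -/
theorem rnm_escapes_critical_point (p : Polynomial ℂ) (hdeg : 2 ≤ p.natDegree)
    (c : ℂ) (hc : p.derivative.eval c = 0) (hpc : p.eval c ≠ 0) :
    ∀ ρ : ℝ, 0 < ρ → ∃ z : ℂ, ‖z - c‖ < ρ ∧ p.eval z ≠ 0 ∧
      ‖p.eval (RN p z)‖ < ‖p.eval c‖ ∧
      ¬ Filter.Tendsto (rnmOrbit p z) Filter.atTop (nhds c) := by
  intro ρ hρ
  obtain ⟨hlt, hcluster⟩ := rnm_escapes_critical_point_general (by omega) hpc le_rfl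
  exact ⟨c, by rwa [sub_self, norm_zero], hpc, hlt, fun h => hcluster h.mapClusterPt⟩
end
end

section
/- RNM orbit invariance of Voronoi regions for z² − 1: Let p(z) = z² − 1 and let z₀ ∈ ℂ with Re z₀ < 0 (respectively Re z₀ > 0). Then the Robust Newton iterate N̂_p(z₀) also satisfies Re N̂_p(z₀) < 0 (respectively Re N̂_p(z₀) > 0); consequently the RNM orbit of z₀ remains in the same open half-plane for all iterations. -/
open Polynomial Filter Topology
open scoped Classical

noncomputable section

/-! Where `p' z ≠ 0`, the Robust Newton iterate lies on the segment from `z` to the Newton iterate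
`N z = z - p z / p' z`, because `|p' z| ≤ A z`. A convex set preserved by `N` and free of critical
points is therefore preserved by the Robust Newton map. For a quadratic with roots `a` and `b`,
`N z - a = (z - a)² / (2z - a - b)` and `N z - b = (z - b)² / (2z - a - b)`, so `N` squares the
ratio of the distances to the two roots and preserves the open half-plane of points closer to
`a`. -/

section RobustNewton

variable {p : ℂ[X]} {z : ℂ}

lemma dEval_one (p : ℂ[X]) (z : ℂ) : dEval p 1 z = p.derivative.eval z := rfl

lemma kIndex_eq_one (hz : p.derivative.eval z ≠ 0) : kIndex p z = 1 := by
  have one_mem : 1 ∈ {j : ℕ | 1 ≤ j ∧ dEval p j z ≠ 0} := ⟨le_rfl, hz⟩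
  exact le_antisymm (Nat.sInf_le one_mem) (Nat.sInf_mem ⟨1, one_mem⟩).1

lemma norm_dEval_div_factorial_le_Amax (p : ℂ[X]) (j : ℕ) (z : ℂ) :
    ‖dEval p j z‖ / j.factorial ≤ Amax p z := by
  have le_of_le_natDegree {i : ℕ} (hi : i ≤ p.natDegree) :
      ‖dEval p i z‖ / i.factorial ≤ Amax p z :=
    Finset.le_sup' (fun i ↦ ‖dEval p i z‖ / i.factorial) (Finset.mem_range_succ_iff.2 hi)
  rcases le_or_gt j p.natDegree with hj | hj
  · exact le_of_le_natDegree hj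
  · have Amax_nonneg : 0 ≤ Amax p z :=
      le_trans (by positivity) (le_of_le_natDegree p.natDegree.zero_le)
    simpa [dEval, iterate_derivative_eq_zero hj] using Amax_nonneg

lemma norm_eval_derivative_le_Amax (p : ℂ[X]) (z : ℂ) :
    ‖p.derivative.eval z‖ ≤ Amax p z := by
  simpa [dEval_one] using norm_dEval_div_factorial_le_Amax p 1 z

lemma uPar_one (p : ℂ[X]) (z : ℂ) :
    uPar p 1 z = p.eval z * (starRingEnd ℂ) (p.derivative.eval z) := by
  simp [uPar, dEval_one]

lemma thetaPar_one (p : ℂ[X]) (z : ℂ) : thetaPar p 1 z = Real.pi := by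
  simp [thetaPar, cPar, gammaPar, deltaPar]

lemma CPar_one (p : ℂ[X]) (z : ℂ) : CPar p 1 z = ‖uPar p 1 z‖ / (3 * Amax p z ^ 2) := by
  have cPar_one : cPar p 1 z = 2 := by simp [cPar, gammaPar, deltaPar]
  have exponent : (2 : ℤ) - (1 : ℕ) = 1 := by norm_num
  rw [CPar, cPar_one, exponent, zpow_one, show 6 * Amax p z ^ 2 = 2 * (3 * Amax p z ^ 2) by ring,
    mul_div_mul_left _ _ two_ne_zero]

lemma rniWith_one (p : ℂ[X]) (z : ℂ) :
    rniWith p 1 z = z - ((1 / (9 * Amax p z ^ 2) : ℝ) : ℂ) * uPar p 1 z := by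
  have norm_mul_direction : (‖uPar p 1 z‖ : ℂ) * (uPar p 1 z / ‖uPar p 1 z‖) = uPar p 1 z :=
    mul_div_cancel_of_imp' fun h ↦ by simpa using h
  calc rniWith p 1 z
      = z - ((1 / (9 * Amax p z ^ 2) : ℝ) : ℂ) *
          ((‖uPar p 1 z‖ : ℂ) * (uPar p 1 z / ‖uPar p 1 z‖)) := by
        rw [rniWith, CPar_one, thetaPar_one, Complex.exp_pi_mul_I]
        push_cast
        ring
    _ = z - ((1 / (9 * Amax p z ^ 2) : ℝ) : ℂ) * uPar p 1 z := by rw [norm_mul_direction]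

lemma RN_eq_lineMap_newtonMap (hz : p.derivative.eval z ≠ 0) :
    RN p z = AffineMap.lineMap z (p.newtonMap z)
      (‖p.derivative.eval z‖ ^ 2 / (9 * Amax p z ^ 2)) := by
  have conj_eq : (starRingEnd ℂ) (p.derivative.eval z) =
      (‖p.derivative.eval z‖ : ℂ) ^ 2 * (p.derivative.eval z)⁻¹ := by
    rw [← Complex.conj_mul', mul_inv_cancel_right₀ hz]
  rw [RN, kIndex_eq_one hz, rniWith_one, uPar_one, conj_eq, AffineMap.lineMap_apply_module',
    newtonMap_apply, Ring.inverse_eq_inv, coe_aeval_eq_eval, Complex.real_smul]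
  push_cast
  ring

lemma RN_mem_segment_newtonMap (hz : p.derivative.eval z ≠ 0) :
    RN p z ∈ segment ℝ z (p.newtonMap z) := by
  rw [RN_eq_lineMap_newtonMap hz]
  refine lineMap_mem_segment ℝ z _ ⟨by positivity, div_le_one_of_le₀ ?_ (by positivity)⟩
  calc ‖p.derivative.eval z‖ ^ 2
      ≤ Amax p z ^ 2 := by gcongr; exact norm_eval_derivative_le_Amax p z
    _ ≤ 9 * Amax p z ^ 2 := by linarith [sq_nonneg (Amax p z)]

lemma mapsTo_RN_of_convex {S : Set ℂ} (hS : Convex ℝ S)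
    (hcrit : ∀ z ∈ S, p.derivative.eval z ≠ 0) (hnewton : Set.MapsTo p.newtonMap S S) :
    Set.MapsTo (RN p) S S := fun z hz ↦
  hS.segment_subset hz (hnewton hz) (RN_mem_segment_newtonMap (hcrit z hz))

lemma rnmOrbit_mem {S : Set ℂ} (hS : Set.MapsTo (RN p) S S) (hz : z ∈ S) (t : ℕ) :
    rnmOrbit p z t ∈ S := by
  induction t with
  | zero => exact hz
  | succ t ih =>
    rw [rnmOrbit]
    split_ifs
    · exact ih
    · exact hS ih

end RobustNewton

section Quadratic

variable {R : Type*} [CommRing R] [IsDomain R] {p : R[X]} {a b : R}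

lemma eq_C_mul_of_roots_eq_pair (hp : p.Splits) (hroots : p.roots = {a, b}) :
    p = C p.leadingCoeff * ((X - C a) * (X - C b)) := by
  simpa [hroots] using hp.eq_prod_roots

lemma eval_derivative_of_roots_eq_pair (hp : p.Splits) (hroots : p.roots = {a, b}) (x : R) :
    p.derivative.eval x = p.leadingCoeff * (2 * x - (a + b)) := by
  have derivative_eq := congrArg derivative (eq_C_mul_of_roots_eq_pair hp hroots)
  rw [derivative_eq]
  simp only [derivative_mul, derivative_C, derivative_X_sub_C, eval_add, eval_mul, eval_sub,
    eval_C, eval_X, eval_zero, eval_one]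
  ring

lemma leadingCoeff_ne_zero_of_roots_eq_pair (hroots : p.roots = {a, b}) :
    p.leadingCoeff ≠ 0 := by
  rw [Ne, leadingCoeff_eq_zero]
  rintro rfl
  simp at hroots

lemma newtonMap_sub_root {K : Type*} [Field K] {p : K[X]} {a b x : K} (hp : p.Splits)
    (hroots : p.roots = {a, b}) (hx : 2 * x ≠ a + b) :
    p.newtonMap x - a = (x - a) ^ 2 / (2 * x - (a + b)) := by
  have eval_eq : p.eval x = p.leadingCoeff * ((x - a) * (x - b)) := by
    simpa using congrArg (eval x) (eq_C_mul_of_roots_eq_pair hp hroots)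
  have lead_ne := leadingCoeff_ne_zero_of_roots_eq_pair hroots
  have newton_step : p.newtonMap x = x - (x - a) * (x - b) / (2 * x - (a + b)) := by
    rw [newtonMap_apply, Ring.inverse_eq_inv, coe_aeval_eq_eval, eval_eq,
      eval_derivative_of_roots_eq_pair hp hroots, inv_mul_eq_div, mul_div_mul_left _ _ lead_ne]
  rw [newton_step, sub_right_comm, eq_div_iff (sub_ne_zero.2 hx), sub_mul,
    div_mul_cancel₀ _ (sub_ne_zero.2 hx)]
  ring

end Quadratic

section Voronoi

/-- The open Voronoi cell of the site `a` in the Voronoi diagram of the two sites `a` and `b`: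
the points strictly closer to `a` than to `b`. With the two roots of a quadratic as sites, the
cells are the Voronoi regions of the quadratic. -/
def voronoiCell {α : Type*} [PseudoMetricSpace α] (a b : α) : Set α := {x | dist x a < dist x b}

lemma mem_voronoiCell {α : Type*} [PseudoMetricSpace α] {a b x : α} :
    x ∈ voronoiCell a b ↔ dist x a < dist x b := Iff.rfl

variable {E : Type*} [NormedAddCommGroup E] [InnerProductSpace ℝ E]

lemma mem_voronoiCell_iff_inner {a b x : E} :
    x ∈ voronoiCell a b ↔ 2 * inner ℝ (b - a) x < ‖b‖ ^ 2 - ‖a‖ ^ 2 := by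
  rw [mem_voronoiCell, dist_eq_norm, dist_eq_norm,
    ← sq_lt_sq₀ (norm_nonneg _) (norm_nonneg _), norm_sub_sq_real, norm_sub_sq_real,
    inner_sub_left, real_inner_comm x a, real_inner_comm x b]
  constructor <;> intro h <;> linarith

lemma convex_voronoiCell (a b : E) : Convex ℝ (voronoiCell a b) := by
  have halfSpace : voronoiCell a b =
      {x | ((2 : ℝ) • innerₛₗ ℝ (b - a)) x < ‖b‖ ^ 2 - ‖a‖ ^ 2} :=
    Set.ext fun x ↦ mem_voronoiCell_iff_inner
  rw [halfSpace]
  exact convex_halfSpace_lt (LinearMap.isLinear _) _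

lemma mem_voronoiCell_neg_right {a x : E} : x ∈ voronoiCell a (-a) ↔ 0 < inner ℝ a x := by
  rw [mem_voronoiCell_iff_inner, norm_neg, sub_self, inner_sub_left, inner_neg_left]
  constructor <;> intro h <;> linarith

end Voronoi

lemma two_mul_ne_add_of_mem_voronoiCell {R : Type*} [SeminormedRing R] {a b x : R}
    (hx : x ∈ voronoiCell a b) : 2 * x ≠ a + b := by
  intro h
  have sub_eq : x - a = b - x := by
    rw [sub_eq_sub_iff_add_eq_add, ← two_mul, h, add_comm]
  refine (mem_voronoiCell.1 hx).ne ?_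
  rw [dist_eq_norm, sub_eq, ← dist_eq_norm, dist_comm]

lemma mapsTo_newtonMap_voronoiCell {p : ℂ[X]} {a b : ℂ} (hroots : p.roots = {a, b}) :
    Set.MapsTo p.newtonMap (voronoiCell a b) (voronoiCell a b) := by
  intro z hz
  have hmid := two_mul_ne_add_of_mem_voronoiCell hz
  have hroots' : p.roots = {b, a} := hroots.trans (Multiset.pair_comm a b)
  have hsplits := IsAlgClosed.splits p
  have denom_pos : 0 < ‖2 * z - (a + b)‖ := norm_pos_iff.2 (sub_ne_zero.2 hmid)
  have norm_lt : ‖z - a‖ < ‖z - b‖ := by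
    simpa only [mem_voronoiCell, Complex.dist_eq] using hz
  rw [mem_voronoiCell, Complex.dist_eq, Complex.dist_eq,
    newtonMap_sub_root hsplits hroots hmid,
    newtonMap_sub_root hsplits hroots' (add_comm a b ▸ hmid), add_comm b a,
    norm_div, norm_div, norm_pow, norm_pow]
  gcongr

lemma mem_voronoiCell_one_neg_one {z : ℂ} : z ∈ voronoiCell 1 (-1) ↔ 0 < z.re := by
  simp [mem_voronoiCell_neg_right, Complex.inner]

lemma mem_voronoiCell_neg_one_one {z : ℂ} : z ∈ voronoiCell (-1) 1 ↔ z.re < 0 := by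
  simpa [Complex.inner] using mem_voronoiCell_neg_right (a := (-1 : ℂ)) (x := z)

lemma roots_X_sq_sub_one : (X ^ 2 - 1 : ℂ[X]).roots = {1, -1} := by
  have factored : (X ^ 2 - 1 : ℂ[X]) = (({1, -1} : Multiset ℂ).map (X - C ·)).prod := by
    simp only [Multiset.insert_eq_cons, Multiset.map_cons, Multiset.map_singleton,
      Multiset.prod_cons, Multiset.prod_singleton, map_neg, map_one]
    ring
  rw [factored, roots_multiset_prod_X_sub_C]

theorem rnm_voronoi_invariance_general {p : ℂ[X]} {a b : ℂ} (hroots : p.roots = {a, b}) :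
    ∀ z₀ ∈ voronoiCell a b,
      RN p z₀ ∈ voronoiCell a b ∧ ∀ t : ℕ, rnmOrbit p z₀ t ∈ voronoiCell a b := by
  have hcrit (z : ℂ) (hz : z ∈ voronoiCell a b) : p.derivative.eval z ≠ 0 := by
    rw [eval_derivative_of_roots_eq_pair (IsAlgClosed.splits p) hroots]
    exact mul_ne_zero (leadingCoeff_ne_zero_of_roots_eq_pair hroots)
      (sub_ne_zero.2 (two_mul_ne_add_of_mem_voronoiCell hz))
  have invariant : Set.MapsTo (RN p) (voronoiCell a b) (voronoiCell a b) :=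
    mapsTo_RN_of_convex (convex_voronoiCell a b) hcrit (mapsTo_newtonMap_voronoiCell hroots)
  exact fun z₀ hz₀ ↦ ⟨invariant hz₀, rnmOrbit_mem invariant hz₀⟩

/-- **RNM orbit invariance of Voronoi regions for `z² − 1`.** If `Re z₀ < 0`
(respectively `Re z₀ > 0`) then the Robust Newton iterate satisfies `Re N̂_p(z₀) < 0`
(respectively `Re N̂_p(z₀) > 0`); consequently the whole RNM orbit of `z₀` remains in the
same open half-plane. -/
theorem rnm_voronoi_invariance :
    (∀ z₀ : ℂ, z₀.re < 0 →
      (RN (X ^ 2 - 1 : Polynomial ℂ) z₀).re < 0 ∧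
      ∀ t : ℕ, (rnmOrbit (X ^ 2 - 1 : Polynomial ℂ) z₀ t).re < 0) ∧
    (∀ z₀ : ℂ, 0 < z₀.re →
      0 < (RN (X ^ 2 - 1 : Polynomial ℂ) z₀).re ∧
      ∀ t : ℕ, 0 < (rnmOrbit (X ^ 2 - 1 : Polynomial ℂ) z₀ t).re) := by
  simp only [← mem_voronoiCell_one_neg_one, ← mem_voronoiCell_neg_one_one]
  exact ⟨rnm_voronoi_invariance_general (roots_X_sq_sub_one.trans (Multiset.pair_comm 1 (-1))),
    rnm_voronoi_invariance_general roots_X_sq_sub_one⟩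
end
end
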